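/- arXiv:2212.07694 — 7 statements merged into one kernel-verified Lean document; each statement's English description precedes it below -/
import Mathlib

section
/- Let κ₁, κ₂ > 0 and γ ≥ 0 with κ₂ ≠ γ and (κ₁ − γ)/(κ₂ − γ) > 0, and set B = √((κ₁ − γ)/(κ₂ − γ)). Then the symmetric real 2×2 matrix [[3κ₁ + γB², 2γB], [2γB, 3κ₂B² + γ]] has eigenvalues exactly β₁ = 3(γ² − κ₁κ₂)/(γ − κ₂) and β₃ = (−γ² + 2γ(κ₁ + κ₂) − 3κ₁κ₂)/(γ − κ₂); that is, its trace equals β₁ + β₃ and its determinant equals β₁β₃. -/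
/-- the upper-left block `[[3κ₁+γB², 2γB],[2γB, 3κ₂B²+γ]]` has eigenvalues
exactly β₁ and β₃: its trace is β₁+β₃ and its determinant is β₁β₃. -/
theorem upper_block_eigenvalues
    (κ₁ κ₂ γ : ℝ) (hκ₁ : 0 < κ₁) (hκ₂ : 0 < κ₂) (hγ : 0 ≤ γ)
    (hne : κ₂ ≠ γ) (hratio : 0 < (κ₁ - γ) / (κ₂ - γ))
    (B : ℝ) (hB : B = Real.sqrt ((κ₁ - γ) / (κ₂ - γ)))
    (β₁ β₃ : ℝ)
    (hβ₁ : β₁ = 3 * (γ ^ 2 - κ₁ * κ₂) / (γ - κ₂))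
    (hβ₃ : β₃ = (-γ ^ 2 + 2 * γ * (κ₁ + κ₂) - 3 * κ₁ * κ₂) / (γ - κ₂))
    (M : Matrix (Fin 2) (Fin 2) ℝ)
    (hM : M = !![3 * κ₁ + γ * B ^ 2, 2 * γ * B; 2 * γ * B, 3 * κ₂ * B ^ 2 + γ]) :
    Matrix.trace M = β₁ + β₃
    ∧ Matrix.det M = β₁ * β₃
    ∧ ∀ μ : ℝ, Matrix.det (M - μ • (1 : Matrix (Fin 2) (Fin 2) ℝ)) = 0 ↔ (μ = β₁ ∨ μ = β₃) := by
  have hd : γ - κ₂ ≠ 0 := sub_ne_zero.mpr (Ne.symm hne)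
  have hd' : κ₂ - γ ≠ 0 := sub_ne_zero.mpr hne
  have hB2 : B ^ 2 = (γ - κ₁) / (γ - κ₂) := by
    rw [hB, Real.sq_sqrt hratio.le, div_eq_div_iff hd' hd]
    ring
  have ht : (3 * κ₁ + γ * B ^ 2) + (3 * κ₂ * B ^ 2 + γ) = β₁ + β₃ := by
    rw [hB2, hβ₁, hβ₃]
    field_simp
    ring
  have hdet : (3 * κ₁ + γ * B ^ 2) * (3 * κ₂ * B ^ 2 + γ) - (2 * γ * B) * (2 * γ * B)
      = β₁ * β₃ := by
    have h : (2 * γ * B) * (2 * γ * B) = 4 * γ ^ 2 * B ^ 2 := by ring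
    rw [h, hB2, hβ₁, hβ₃]
    field_simp
    ring
  refine ⟨?_, ?_, ?_⟩
  · rw [hM, Matrix.trace_fin_two_of, ht]
  · rw [hM, Matrix.det_fin_two_of, hdet]
  · intro μ
    have key : Matrix.det (M - μ • (1 : Matrix (Fin 2) (Fin 2) ℝ)) = (μ - β₁) * (μ - β₃) := by
      rw [hM, Matrix.det_fin_two]
      simp
      linear_combination hdet - μ * ht
    rw [key, mul_eq_zero, sub_eq_zero, sub_eq_zero]
end

section
/- Let L > 0, c > 0, and ω > 2π²/L². Then there exists a twice continuously differentiable, nonconstant, L-periodic function φ : ℝ → ℝ that is even and strictly positive on ℝ and satisfies the ordinary differential equation −φ''(x) + ω φ(x) − c φ(x)³ = 0 for all x ∈ ℝ. -/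
/-- Positivity of the radicand. -/
lemma dn_rad_pos (m : ℝ) (hm1 : m < 1) (t : ℝ) : 0 < 1 - m * Real.sin t ^ 2 := by
  have h1 := Real.sin_sq_le_one t
  have h2 := sq_nonneg (Real.sin t)
  rcases le_total m 0 with h | h
  · nlinarith
  · nlinarith

lemma dn_integrand_cont (m : ℝ) (hm1 : m < 1) :
    Continuous fun t : ℝ => (Real.sqrt (1 - m * Real.sin t ^ 2))⁻¹ := by
  apply Continuous.inv₀ (by fun_prop)
  exact fun t => ne_of_gt (Real.sqrt_pos.2 (dn_rad_pos m hm1 t))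

/-- Existence of the Jacobi amplitude. -/
lemma exists_am (m : ℝ) (hm0 : 0 ≤ m) (hm1 : m < 1) :
    ∃ θ : ℝ → ℝ, (∀ u, HasDerivAt θ (Real.sqrt (1 - m * Real.sin (θ u) ^ 2)) u)
      ∧ (∀ u, θ (-u) = -θ u) ∧ Function.Surjective θ
      ∧ (∀ u, θ (u + ∫ t in (0:ℝ)..Real.pi, (Real.sqrt (1 - m * Real.sin t ^ 2))⁻¹)
          = θ u + Real.pi) := by
  set f : ℝ → ℝ := fun t => (Real.sqrt (1 - m * Real.sin t ^ 2))⁻¹ with hf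
  have hfc : Continuous f := dn_integrand_cont m hm1
  have hint : ∀ a b, IntervalIntegrable f MeasureTheory.volume a b :=
    fun a b => hfc.intervalIntegrable a b
  have hspos : ∀ t, 0 < Real.sqrt (1 - m * Real.sin t ^ 2) :=
    fun t => Real.sqrt_pos.2 (dn_rad_pos m hm1 t)
  have hf1 : ∀ t, 1 ≤ f t := by
    intro t
    apply (one_le_inv₀ (hspos t)).2
    rw [Real.sqrt_le_iff]
    refine ⟨zero_le_one, ?_⟩
    nlinarith [mul_nonneg hm0 (sq_nonneg (Real.sin t))]
  set F : ℝ → ℝ := fun x => ∫ t in (0:ℝ)..x, f t with hF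
  have hFd : ∀ x, HasDerivAt F (f x) x := fun x => hfc.integral_hasStrictDerivAt 0 x |>.hasDerivAt
  have hF0 : F 0 = 0 := by simp [hF]
  have hmono : StrictMono F := strictMono_of_hasDerivAt_pos hFd (fun x => by linarith [hf1 x])
  have hmono2 : Monotone (fun x => F x - x) :=
    monotone_of_hasDerivAt_nonneg (fun x => (hFd x).sub (hasDerivAt_id x))
      (fun x => by simpa using hf1 x)
  have hFc : Continuous F := continuous_iff_continuousAt.2 fun x => (hFd x).continuousAt
  have hsurj : Function.Surjective F := by
    apply hFc.surjective
    · apply Filter.tendsto_atTop_mono' _ _ Filter.tendsto_id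
      filter_upwards [Filter.eventually_ge_atTop 0] with x hx
      have := hmono2 hx
      simp [hF0] at this
      simpa using this
    · apply Filter.tendsto_atBot_mono' _ _ Filter.tendsto_id
      filter_upwards [Filter.eventually_le_atBot 0] with x hx
      have := hmono2 hx
      simp [hF0] at this
      simpa using this
  let e := hmono.orderIsoOfSurjective F hsurj
  have heF : ∀ x, e x = F x := fun x => rfl
  have hFe : ∀ u, F (e.symm u) = u := fun u => by rw [← heF]; exact e.apply_symm_apply u
  have hodd : ∀ x, F (-x) = -F x := by
    intro x
    have h := intervalIntegral.integral_comp_neg (a := 0) (b := x) f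
    have h2 : (fun t => f (-t)) = f := by funext t; simp [hf]
    rw [show (∫ t in (0:ℝ)..x, f (-t)) = ∫ t in (0:ℝ)..x, f t from by
      exact congrArg (fun g : ℝ → ℝ => ∫ t in (0:ℝ)..x, g t) h2] at h
    simp only [hF, h, neg_zero]
    exact intervalIntegral.integral_symm _ _
  have hper : ∀ x, F (x + Real.pi) = F x + F Real.pi := by
    intro x
    have hp : Function.Periodic f Real.pi := by intro t; simp [hf, Real.sin_add_pi]
    have h := hp.intervalIntegral_add_eq 0 x
    have h2 := intervalIntegral.integral_add_adjacent_intervals (hint 0 x) (hint x (x + Real.pi))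
    rw [zero_add] at h
    simp only [hF]
    rw [← h2, ← h]
  refine ⟨e.symm, ?_, ?_, e.symm.surjective, ?_⟩
  · intro u
    have h := HasDerivAt.of_local_left_inverse (f := F) (g := e.symm) (a := u)
      e.symm.continuous.continuousAt (hFd _) (by linarith [hf1 (e.symm u)])
      (Filter.Eventually.of_forall hFe)
    simpa [hf] using h
  · intro u
    apply hmono.injective
    rw [hFe, hodd, hFe]
  · intro u
    apply hmono.injective
    rw [hFe, hper, hFe]

/-- The complete elliptic integral is unbounded. -/
lemma dn_integral_large (M : ℝ) (hM : 0 < M) : ∃ m : ℝ, 0 < m ∧ m < 1 ∧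
    M ≤ ∫ t in (0:ℝ)..Real.pi, (Real.sqrt (1 - m * Real.sin t ^ 2))⁻¹ := by
  set ε := Real.exp (-M) with hε
  have hε0 : 0 < ε := Real.exp_pos _
  have hε1 : ε < 1 := by rw [hε, ← Real.exp_zero]; exact Real.exp_lt_exp.2 (by linarith)
  have hpi := Real.pi_gt_three
  have hm1 : 1 - ε ^ 2 < 1 := by nlinarith
  refine ⟨1 - ε ^ 2, by nlinarith, hm1, ?_⟩
  have hc := dn_integrand_cont (1 - ε ^ 2) hm1
  have hspos : ∀ t, 0 < Real.sqrt (1 - (1 - ε ^ 2) * Real.sin t ^ 2) :=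
    fun t => Real.sqrt_pos.2 (dn_rad_pos _ hm1 t)
  have h1 : ∫ t in (0:ℝ)..(Real.pi / 2), (ε + Real.pi / 2 - t)⁻¹
      = Real.log ((ε + Real.pi / 2) / ε) := by
    have := intervalIntegral.integral_comp_sub_left (a := 0) (b := Real.pi / 2)
      (fun x : ℝ => x⁻¹) (ε + Real.pi / 2)
    rw [this, integral_inv_of_pos (by linarith) (by linarith)]
    congr 2 <;> ring
  have h2 : M ≤ Real.log ((ε + Real.pi / 2) / ε) := by
    rw [Real.le_log_iff_exp_le (by positivity), le_div_iff₀ hε0, hε, ← Real.exp_add]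
    simp
    linarith
  have h3 : ∫ t in (0:ℝ)..(Real.pi / 2), (ε + Real.pi / 2 - t)⁻¹ ≤
      ∫ t in (0:ℝ)..(Real.pi / 2), (Real.sqrt (1 - (1 - ε ^ 2) * Real.sin t ^ 2))⁻¹ := by
    apply intervalIntegral.integral_mono_on (by linarith)
    · apply ContinuousOn.intervalIntegrable
      apply ContinuousOn.inv₀ (by fun_prop)
      intro t ht
      rw [Set.uIcc_of_le (by linarith)] at ht
      linarith [ht.2]
    · exact hc.intervalIntegrable _ _
    · intro t ht
      apply inv_anti₀ (hspos t)
      have hk : 0 ≤ Real.cos t := Real.cos_nonneg_of_mem_Icc ⟨by linarith [ht.1], ht.2⟩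
      have hk2 : Real.cos t ≤ Real.pi / 2 - t := by
        rw [← Real.sin_pi_div_two_sub]
        exact Real.sin_le (by linarith [ht.2])
      apply Real.sqrt_le_iff.2 ⟨by linarith [ht.2], ?_⟩
      have := Real.sin_sq_add_cos_sq t
      have h5 : Real.sin t ^ 2 = 1 - Real.cos t ^ 2 := by linarith
      rw [h5]
      have : Real.cos t ^ 2 ≤ (Real.pi / 2 - t) ^ 2 := by gcongr
      nlinarith [mul_nonneg hε0.le (sub_nonneg.2 ht.2), sq_nonneg (ε * Real.cos t)]
  have h4 := intervalIntegral.integral_add_adjacent_intervals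
    (hc.intervalIntegrable (μ := MeasureTheory.volume) 0 (Real.pi / 2))
    (hc.intervalIntegrable (Real.pi / 2) Real.pi)
  have h6 : 0 ≤ ∫ t in (Real.pi / 2)..Real.pi,
      (Real.sqrt (1 - (1 - ε ^ 2) * Real.sin t ^ 2))⁻¹ :=
    intervalIntegral.integral_nonneg (by linarith) (fun t _ => (inv_pos.2 (hspos t)).le)
  linarith

/-- Matching of the period. -/
lemma exists_modulus (T : ℝ) (hT : 2 * Real.pi ^ 2 < T) : ∃ m : ℝ, 0 < m ∧ m < 1 ∧
    0 < (∫ t in (0:ℝ)..Real.pi, (Real.sqrt (1 - m * Real.sin t ^ 2))⁻¹) ∧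
    (∫ t in (0:ℝ)..Real.pi, (Real.sqrt (1 - m * Real.sin t ^ 2))⁻¹) ^ 2 * (2 - m) = T := by
  have hT0 : 0 < T := lt_trans (by positivity) hT
  obtain ⟨m₁, h0, h1, hM⟩ := dn_integral_large (Real.sqrt T) (Real.sqrt_pos.2 hT0)
  set I : ℝ → ℝ := fun m => ∫ t in (0:ℝ)..Real.pi, (Real.sqrt (1 - m * Real.sin t ^ 2))⁻¹ with hI
  have hIc : Continuous fun m => I (min m m₁) := by
    apply intervalIntegral.continuous_parametric_intervalIntegral_of_continuous'
      (f := fun m t => (Real.sqrt (1 - (min m m₁) * Real.sin t ^ 2))⁻¹)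
    apply Continuous.inv₀ (by fun_prop)
    rintro ⟨m, t⟩
    exact (Real.sqrt_pos.2 (dn_rad_pos _ (lt_of_le_of_lt (min_le_right _ _) h1) t)).ne'
  have hG : ContinuousOn (fun m => I (min m m₁) ^ 2 * (2 - m)) (Set.Icc 0 m₁) := by
    apply Continuous.continuousOn
    exact (hIc.pow 2).mul (by fun_prop)
  have hI0 : I 0 = Real.pi := by simp [hI]
  have hsub := intermediate_value_Icc h0.le hG
  have hMT : T ≤ I m₁ ^ 2 * (2 - m₁) := by
    have : T ≤ I m₁ ^ 2 := by
      rw [← Real.sq_sqrt hT0.le]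
      have := Real.sqrt_nonneg T
      gcongr
    nlinarith [sq_nonneg (I m₁)]
  obtain ⟨m, hm, hmT⟩ := hsub (show T ∈ _ by
    constructor
    · simp only [min_eq_left h0.le, hI0]; linarith
    · simpa using hMT)
  simp only [min_eq_left hm.2] at hmT
  have hm1 : m < 1 := lt_of_le_of_lt hm.2 h1
  refine ⟨m, ?_, hm1, ?_, hmT⟩
  · rcases hm.1.eq_or_lt with h | h
    · rw [← h, hI0] at hmT; linarith
    · exact h
  · apply intervalIntegral.intervalIntegral_pos_of_pos _ _ Real.pi_pos
    · exact (dn_integrand_cont m hm1).intervalIntegrable _ _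
    · intro t
      exact inv_pos.2 (Real.sqrt_pos.2 (dn_rad_pos m hm1 t))

/-- existence of dnoidal-type waves: for `L > 0`, `c > 0` and
`ω > 2π²/L²` there is a nonconstant, even, strictly positive, `C²`, `L`-periodic
solution of `−φ'' + ωφ − cφ³ = 0`. -/
theorem exists_dnoidal_wave
    (L c ω : ℝ) (hL : 0 < L) (hc : 0 < c) (hω : 2 * Real.pi ^ 2 / L ^ 2 < ω) :
    ∃ φ : ℝ → ℝ,
      ContDiff ℝ 2 φ
      ∧ (¬ ∃ a : ℝ, ∀ x : ℝ, φ x = a)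
      ∧ Function.Periodic φ L
      ∧ (∀ x : ℝ, φ (-x) = φ x)
      ∧ (∀ x : ℝ, 0 < φ x)
      ∧ (∀ x : ℝ, -deriv (deriv φ) x + ω * φ x - c * (φ x) ^ 3 = 0) := by
  obtain ⟨m, hm0, hm1, hP, hT⟩ := exists_modulus (ω * L ^ 2) (by
    rwa [div_lt_iff₀ (by positivity)] at hω)
  obtain ⟨θ, hθ, hodd, hsurj, hper⟩ := exists_am m hm0.le hm1
  set P := ∫ t in (0:ℝ)..Real.pi, (Real.sqrt (1 - m * Real.sin t ^ 2))⁻¹ with hPdef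
  set D : ℝ → ℝ := fun u => Real.sqrt (1 - m * Real.sin (θ u) ^ 2) with hD
  have hDpos : ∀ u, 0 < D u := fun u => Real.sqrt_pos.2 (dn_rad_pos m hm1 _)
  have hDsq : ∀ u, D u ^ 2 = 1 - m * Real.sin (θ u) ^ 2 :=
    fun u => Real.sq_sqrt (dn_rad_pos m hm1 _).le
  have hθ' : ∀ u, HasDerivAt θ (D u) u := hθ
  have hD1 : ∀ u, HasDerivAt D (-m * (Real.sin (θ u) * Real.cos (θ u))) u := by
    intro u
    have h := ((((hθ' u).sin.pow 2).const_mul m).const_sub 1).sqrt (dn_rad_pos m hm1 _).ne'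
    refine h.congr_deriv ?_
    have := (hDpos u).ne'
    change _ / (2 * D u) = _
    field_simp
    norm_num
    ring
  have hD2 : ∀ u, HasDerivAt (fun u => -m * (Real.sin (θ u) * Real.cos (θ u)))
      ((2 - m) * D u - 2 * D u ^ 3) u := by
    intro u
    have h := ((hθ' u).sin.mul (hθ' u).cos).const_mul (-m)
    refine h.congr_deriv ?_
    have h1 := hDsq u
    have h2 := Real.sin_sq_add_cos_sq (θ u)
    have h3 : Real.cos (θ u) ^ 2 = 1 - Real.sin (θ u) ^ 2 := by linarith
    linear_combination (2 * D u) * h1 - m * D u * h3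
  set β := P / L with hβ
  have hβ0 : 0 < β := div_pos hP hL
  have hβω : β ^ 2 * (2 - m) = ω := by
    rw [hβ, div_pow]; field_simp; linarith
  set A := β * Real.sqrt (2 / c) with hA
  have hA0 : 0 < A := mul_pos hβ0 (Real.sqrt_pos.2 (by positivity))
  have hA2 : c * A ^ 2 = 2 * β ^ 2 := by
    rw [hA, mul_pow, Real.sq_sqrt (by positivity)]; field_simp
  set φ : ℝ → ℝ := fun x => A * D (β * x) with hφ
  have hlin : ∀ x, HasDerivAt (fun x : ℝ => β * x) β x := fun x => by
    simpa using (hasDerivAt_id x).const_mul β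
  have hφ1 : ∀ x, HasDerivAt φ
      (A * (-m * (Real.sin (θ (β * x)) * Real.cos (θ (β * x))) * β)) x :=
    fun x => ((hD1 (β * x)).comp x (hlin x)).const_mul A
  have hφ1' : deriv φ = fun x => A * (-m * (Real.sin (θ (β * x)) * Real.cos (θ (β * x))) * β) :=
    funext fun x => (hφ1 x).deriv
  have hφ2 : ∀ x, HasDerivAt (deriv φ) (ω * φ x - c * φ x ^ 3) x := by
    intro x
    rw [hφ1']
    refine ((((hD2 (β * x)).comp x (hlin x)).mul_const β).const_mul A).congr_deriv ?_
    simp only [hφ]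
    linear_combination (A * D (β * x)) * hβω + (A * D (β * x) ^ 3) * hA2
  have hφc : Continuous φ := continuous_iff_continuousAt.2 fun x => (hφ1 x).continuousAt
  refine ⟨φ, ?_, ?_, ?_, ?_, fun x => mul_pos hA0 (hDpos _), ?_⟩
  · rw [show (2 : WithTop ℕ∞) = 1 + 1 from by norm_num, contDiff_succ_iff_deriv]
    refine ⟨fun x => (hφ1 x).differentiableAt, by simp, ?_⟩
    rw [contDiff_one_iff_deriv]
    refine ⟨fun x => (hφ2 x).differentiableAt, ?_⟩
    rw [show deriv (deriv φ) = fun x => ω * φ x - c * φ x ^ 3 from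
      funext fun x => (hφ2 x).deriv]
    fun_prop
  · rintro ⟨a, ha⟩
    have key : ∀ u v, D u = D v := by
      intro u v
      have h1 := ha (u / β)
      have h2 := ha (v / β)
      simp only [hφ, mul_div_cancel₀ _ hβ0.ne'] at h1 h2
      exact mul_left_cancel₀ hA0.ne' (h1.trans h2.symm)
    obtain ⟨u, hu⟩ := hsurj 0
    obtain ⟨v, hv⟩ := hsurj (Real.pi / 2)
    have h1 := hDsq u
    have h2 := hDsq v
    rw [key u v, hu, Real.sin_zero] at h1
    rw [hv, Real.sin_pi_div_two] at h2
    linarith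
  · intro x
    have : β * (x + L) = β * x + P := by rw [hβ]; field_simp
    simp only [hφ, hD, this, hper, Real.sin_add_pi, neg_sq]
  · intro x
    simp only [hφ, hD, mul_neg, hodd, Real.sin_neg, neg_sq]
  · intro x
    rw [(hφ2 x).deriv]; ring
end

section
/- Let L > 0, c > 0, and ω > 0. Then there exists a twice continuously differentiable, nonconstant, L-periodic function ψ : ℝ → ℝ that is odd and satisfies the ordinary differential equation −ψ''(x) + ω ψ(x) − c ψ(x)³ = 0 for all x ∈ ℝ. -/
namespace Cnoidal

open Real Set Filter Topology MeasureTheory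

/-- the weight under the square root -/
noncomputable def h (ω D t : ℝ) : ℝ := D + (ω + D) * sin t ^ 2

lemma h_ge {ω D : ℝ} (hω : 0 < ω) (hD : 0 < D) (t : ℝ) : D ≤ h ω D t := by
  unfold h; nlinarith [mul_nonneg (add_pos hω hD).le (sq_nonneg (sin t))]

lemma h_pos {ω D : ℝ} (hω : 0 < ω) (hD : 0 < D) (t : ℝ) : 0 < h ω D t :=
  lt_of_lt_of_le hD (h_ge hω hD t)

lemma h_le {ω D : ℝ} (hω : 0 < ω) (hD : 0 < D) (t : ℝ) : h ω D t ≤ ω + 2 * D := by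
  unfold h; nlinarith [sin_sq_le_one t]

lemma g_cont {ω D : ℝ} (hω : 0 < ω) (hD : 0 < D) :
    Continuous (fun t => 1 / √(h ω D t)) := by
  refine Continuous.div continuous_const ?_ (fun t => (sqrt_pos.2 (h_pos hω hD t)).ne')
  unfold h; fun_prop

/-- the period -/
noncomputable def T (ω D : ℝ) : ℝ := ∫ t in (0:ℝ)..(2 * π), 1 / √(h ω D t)

lemma T_cont {ω : ℝ} (hω : 0 < ω) : Continuous (fun u => T ω (exp u)) := by
  unfold T
  apply intervalIntegral.continuous_parametric_intervalIntegral_of_continuous'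
  refine Continuous.div continuous_const ?_
    (fun p => (sqrt_pos.2 (h_pos hω (exp_pos p.1) p.2)).ne')
  unfold h; fun_prop

lemma T_small {ω L : ℝ} (hω : 0 < ω) (hL : 0 < L) : ∃ u, T ω (exp u) ≤ L := by
  refine ⟨log ((2 * π / L) ^ 2), ?_⟩
  have hq : 0 < 2 * π / L := by positivity
  rw [exp_log (by positivity)]
  have hD : 0 < (2 * π / L) ^ 2 := by positivity
  unfold T
  have : ∫ t in (0:ℝ)..(2 * π), 1 / √(h ω ((2 * π / L) ^ 2) t) ≤
      ∫ t in (0:ℝ)..(2 * π), 1 / (2 * π / L) := by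
    apply intervalIntegral.integral_mono_on (by positivity)
      ((g_cont hω hD).intervalIntegrable _ _) (by simp)
    intro t _
    apply one_div_le_one_div_of_le hq
    exact le_sqrt_of_sq_le (h_ge hω hD t)
  refine this.trans (le_of_eq ?_)
  rw [intervalIntegral.integral_const]
  have := pi_pos.ne'
  simp only [smul_eq_mul]
  field_simp
  ring

lemma T_large {ω L : ℝ} (hω : 0 < ω) (hL : 0 < L) : ∃ u, L ≤ T ω (exp u) := by
  obtain ⟨s, hs, hs2⟩ : ∃ s : ℝ, 0 < s ∧ s ^ 2 = ω + 1 :=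
    ⟨√(ω + 1), by positivity, sq_sqrt (by positivity)⟩
  obtain ⟨d, hd, hd1, hd2⟩ : ∃ d : ℝ, 0 < d ∧ d ≤ 1 ∧ d ≤ s / exp (L * s) :=
    ⟨min 1 (s / exp (L * s)), by positivity, min_le_left _ _, min_le_right _ _⟩
  refine ⟨log (d ^ 2), ?_⟩
  rw [exp_log (by positivity)]
  have hD : 0 < d ^ 2 := by positivity
  have h1 : ∀ t ∈ Icc (0:ℝ) 1, 1 / (d + s * t) ≤ 1 / √(h ω (d ^ 2) t) := by
    intro t ht
    apply one_div_le_one_div_of_le (sqrt_pos.2 (h_pos hω hD t))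
    apply sqrt_le_iff.2
    have h0 : 0 ≤ s * t := mul_nonneg hs.le ht.1
    refine ⟨by positivity, ?_⟩
    have h3 : sin t ^ 2 ≤ t ^ 2 := sq_le_sq.2 abs_sin_le_abs
    have h4 : (ω + d ^ 2) * sin t ^ 2 ≤ s ^ 2 * t ^ 2 := by
      rw [hs2]; gcongr; nlinarith
    unfold h
    nlinarith [mul_nonneg hd.le h0]
  have hne : ∀ t ∈ uIcc (0:ℝ) 1, d + s * t ≠ 0 := by
    intro t ht
    rw [uIcc_of_le zero_le_one] at ht
    have h0 : 0 ≤ s * t := mul_nonneg hs.le ht.1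
    positivity
  have hc : ContinuousOn (fun t => 1 / (d + s * t)) (uIcc (0:ℝ) 1) :=
    ContinuousOn.div (by fun_prop) (by fun_prop) hne
  have h2 : ∫ t in (0:ℝ)..1, 1 / (d + s * t) = log (d + s * 1) / s - log (d + s * 0) / s := by
    apply intervalIntegral.integral_eq_sub_of_hasDerivAt (f := fun t => log (d + s * t) / s)
    · intro t ht
      have : HasDerivAt (fun t => d + s * t) s t := by
        simpa using ((hasDerivAt_id t).const_mul s).const_add d
      refine ((this.log (hne t ht)).div_const s).congr_deriv ?_
      have := hne t ht
      field_simp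
    · exact hc.intervalIntegrable
  have h3 : ∫ t in (0:ℝ)..1, 1 / (d + s * t) ≤ ∫ t in (0:ℝ)..1, 1 / √(h ω (d ^ 2) t) :=
    intervalIntegral.integral_mono_on zero_le_one hc.intervalIntegrable
      ((g_cont hω hD).intervalIntegrable _ _) h1
  have h4 : ∫ t in (0:ℝ)..1, 1 / √(h ω (d ^ 2) t) ≤ T ω (d ^ 2) := by
    unfold T
    apply intervalIntegral.integral_mono_interval le_rfl zero_le_one
    · linarith [pi_gt_three]
    · exact Eventually.of_forall (fun t => by simp only [Pi.zero_apply]; positivity)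
    · exact (g_cont hω hD).intervalIntegrable _ _
  refine le_trans ?_ (h3.trans h4)
  rw [h2, mul_zero, mul_one, add_zero, ← sub_div, le_div_iff₀ hs, ← log_div (by positivity) hd.ne',
    le_log_iff_exp_le (by positivity), le_div_iff₀ hd]
  rw [le_div_iff₀ (exp_pos _)] at hd2
  linarith

lemma exists_T {ω L : ℝ} (hω : 0 < ω) (hL : 0 < L) : ∃ D, 0 < D ∧ T ω D = L := by
  obtain ⟨u, hu⟩ := mem_range_of_exists_le_of_exists_ge (T_cont hω) (T_small hω hL) (T_large hω hL)
  exact ⟨exp u, exp_pos u, hu⟩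

/-- the inverse of the amplitude -/
noncomputable def F (ω D y : ℝ) : ℝ := ∫ t in (0:ℝ)..y, 1 / √(h ω D t)

lemma F_deriv {ω D : ℝ} (hω : 0 < ω) (hD : 0 < D) (y : ℝ) :
    HasDerivAt (F ω D) (1 / √(h ω D y)) y :=
  intervalIntegral.integral_hasDerivAt_right ((g_cont hω hD).intervalIntegrable _ _)
    ((g_cont hω hD).stronglyMeasurableAtFilter _ _) (g_cont hω hD).continuousAt

lemma F_neg (ω D y : ℝ) : F ω D (-y) = - F ω D y := by
  unfold F
  have := intervalIntegral.integral_comp_neg (a := 0) (b := y) (fun t => 1 / √(h ω D t))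
  rw [neg_zero] at this
  rw [intervalIntegral.integral_symm, ← this]
  simp [h]

lemma F_add {ω D : ℝ} (hω : 0 < ω) (hD : 0 < D) (y : ℝ) :
    F ω D (y + 2 * π) = F ω D y + T ω D := by
  unfold F T
  have hp : Function.Periodic (fun t => 1 / √(h ω D t)) (2 * π) := fun t => by simp [h]
  have := hp.intervalIntegral_add_eq y 0
  rw [zero_add] at this
  rw [← this]
  exact (intervalIntegral.integral_add_adjacent_intervals
    ((g_cont hω hD).intervalIntegrable _ _) ((g_cont hω hD).intervalIntegrable _ _)).symm

lemma F_strictMono {ω D : ℝ} (hω : 0 < ω) (hD : 0 < D) : StrictMono (F ω D) :=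
  strictMono_of_hasDerivAt_pos (F_deriv hω hD)
    (fun y => one_div_pos.2 (sqrt_pos.2 (h_pos hω hD y)))

lemma F_surj {ω D : ℝ} (hω : 0 < ω) (hD : 0 < D) : Function.Surjective (F ω D) := by
  have hK : 0 < √(ω + 2 * D) := by positivity
  have hm : Monotone (fun y => F ω D y - 1 / √(ω + 2 * D) * y) := by
    have hd : ∀ y, HasDerivAt (fun y => F ω D y - 1 / √(ω + 2 * D) * y)
        (1 / √(h ω D y) - 1 / √(ω + 2 * D)) y := fun y => by
      exact ((F_deriv hω hD y).sub ((hasDerivAt_id y).const_mul (1 / √(ω + 2 * D)))).congr_deriv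
        (by simp)
    apply monotone_of_deriv_nonneg (fun y => (hd y).differentiableAt)
    intro y
    rw [(hd y).deriv, sub_nonneg]
    exact one_div_le_one_div_of_le (sqrt_pos.2 (h_pos hω hD y)) (sqrt_le_sqrt (h_le hω hD y))
  have hF0 : F ω D 0 = 0 := by simp [F]
  intro x
  have hcont : Continuous (F ω D) :=
    continuous_iff_continuousAt.2 fun y => (F_deriv hω hD y).continuousAt
  have hx : 0 ≤ √(ω + 2 * D) * |x| := by positivity
  apply mem_range_of_exists_le_of_exists_ge hcont
  · refine ⟨-(√(ω + 2 * D) * |x|), ?_⟩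
    have := hm (neg_nonpos.2 hx)
    have h2 : 1 / √(ω + 2 * D) * -(√(ω + 2 * D) * |x|) = -|x| := by field_simp
    simp only [hF0, h2] at this
    linarith [neg_abs_le x]
  · refine ⟨√(ω + 2 * D) * |x|, ?_⟩
    have := hm hx
    have h2 : 1 / √(ω + 2 * D) * (√(ω + 2 * D) * |x|) = |x| := by field_simp
    simp only [hF0, h2] at this
    linarith [le_abs_self x]

lemma exists_amp {ω D : ℝ} (hω : 0 < ω) (hD : 0 < D) : ∃ φ : ℝ → ℝ,
    (∀ x, F ω D (φ x) = x) ∧ (∀ y, φ (F ω D y) = y) ∧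
    (∀ x, HasDerivAt φ (√(h ω D (φ x))) x) := by
  let e := (F_strictMono hω hD).orderIsoOfSurjective _ (F_surj hω hD)
  have h1 : ∀ x, F ω D (e.symm x) = x := fun x => e.apply_symm_apply x
  refine ⟨e.symm, h1, fun y => e.symm_apply_apply y, fun x => ?_⟩
  have := HasDerivAt.of_local_left_inverse (f := F ω D) (g := e.symm) (a := x)
    e.symm.continuous.continuousAt (F_deriv hω hD _)
    (one_div_pos.2 (sqrt_pos.2 (h_pos hω hD _))).ne' (Eventually.of_forall h1)
  simpa using this

end Cnoidal

/-- existence of (shifted) cnoidal-type waves: for `L > 0`, `c > 0`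
and `ω > 0` there is a nonconstant, odd, `C²`, `L`-periodic solution of
`−ψ'' + ωψ − cψ³ = 0`. -/
theorem exists_odd_cnoidal_wave
    (L c ω : ℝ) (hL : 0 < L) (hc : 0 < c) (hω : 0 < ω) :
    ∃ ψ : ℝ → ℝ,
      ContDiff ℝ 2 ψ
      ∧ (¬ ∃ a : ℝ, ∀ x : ℝ, ψ x = a)
      ∧ Function.Periodic ψ L
      ∧ (∀ x : ℝ, ψ (-x) = -ψ x)
      ∧ (∀ x : ℝ, -deriv (deriv ψ) x + ω * ψ x - c * (ψ x) ^ 3 = 0) := by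
  obtain ⟨D, hD, hT⟩ := Cnoidal.exists_T hω hL
  obtain ⟨φ, hr, hl, hφ⟩ := Cnoidal.exists_amp hω hD
  obtain ⟨A, hA, hA2⟩ : ∃ A : ℝ, 0 < A ∧ c * A ^ 2 = 2 * (ω + D) :=
    ⟨√(2 * (ω + D) / c), by positivity, by rw [Real.sq_sqrt (by positivity)]; field_simp⟩
  have d1 : ∀ x, HasDerivAt (fun x => A * Real.sin (φ x))
      (A * (Real.cos (φ x) * √(Cnoidal.h ω D (φ x)))) x := fun x => (hφ x).sin.const_mul A
  have dh : ∀ x, HasDerivAt (fun x => √(Cnoidal.h ω D (φ x)))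
      ((ω + D) * Real.sin (φ x) * Real.cos (φ x)) x := by
    intro x
    have hp := Cnoidal.h_pos hω hD (φ x)
    have hs := Real.sqrt_pos.2 hp
    have h0 : HasDerivAt (fun x => Cnoidal.h ω D (φ x))
        ((ω + D) * (2 * Real.sin (φ x) * (Real.cos (φ x) * √(Cnoidal.h ω D (φ x))))) x := by
      exact (((((hφ x).sin).pow 2).const_mul (ω + D)).const_add D).congr_deriv (by simp)
    refine (h0.sqrt hp.ne').congr_deriv ?_
    field_simp
  have d2 : ∀ x, HasDerivAt (fun x => A * (Real.cos (φ x) * √(Cnoidal.h ω D (φ x))))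
      (ω * (A * Real.sin (φ x)) - c * (A * Real.sin (φ x)) ^ 3) x := by
    intro x
    refine ((((hφ x).cos).mul (dh x)).const_mul A).congr_deriv ?_
    have hsq : √(Cnoidal.h ω D (φ x)) * √(Cnoidal.h ω D (φ x)) = D + (ω + D) * Real.sin (φ x) ^ 2 :=
      Real.mul_self_sqrt (Cnoidal.h_pos hω hD (φ x)).le
    have hcs := Real.sin_sq_add_cos_sq (φ x)
    linear_combination (A * Real.sin (φ x) ^ 3) * hA2 - A * Real.sin (φ x) * hsq
      + A * (ω + D) * Real.sin (φ x) * hcs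
  have e1 : deriv (fun x => A * Real.sin (φ x)) =
      fun x => A * (Real.cos (φ x) * √(Cnoidal.h ω D (φ x))) := funext fun x => (d1 x).deriv
  have e2 : deriv (fun x => A * (Real.cos (φ x) * √(Cnoidal.h ω D (φ x)))) =
      fun x => ω * (A * Real.sin (φ x)) - c * (A * Real.sin (φ x)) ^ 3 :=
    funext fun x => (d2 x).deriv
  have hcφ : Continuous φ := continuous_iff_continuousAt.2 fun x => (hφ x).continuousAt
  refine ⟨fun x => A * Real.sin (φ x), ?_, ?_, ?_, ?_, ?_⟩
  · rw [show (2 : WithTop ℕ∞) = 1 + 1 by norm_num, contDiff_succ_iff_deriv]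
    refine ⟨fun x => (d1 x).differentiableAt, by simp, ?_⟩
    rw [e1, contDiff_one_iff_deriv, e2]
    exact ⟨fun x => (d2 x).differentiableAt, by fun_prop⟩
  · rintro ⟨a, ha⟩
    have h0 := ha (Cnoidal.F ω D 0)
    have h1 := ha (Cnoidal.F ω D (Real.pi / 2))
    simp only [hl, Real.sin_zero, Real.sin_pi_div_two] at h0 h1
    linarith
  · intro x
    have : φ (x + L) = φ x + 2 * Real.pi := by
      rw [← hl (φ x + 2 * Real.pi), Cnoidal.F_add hω hD, hr, hT]
    simp only [this, Real.sin_add_two_pi]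
  · intro x
    have : φ (-x) = -φ x := by rw [← hl (-φ x), Cnoidal.F_neg, hr]
    simp only [this, Real.sin_neg, mul_neg]
  · intro x
    rw [e1, e2]
    ring
end

section
/- Let L > 0 and define K(k) = ∫₀^{π/2} (1 − k² sin²θ)^{−1/2} dθ for k ∈ (0,1). Then the function f : (0,1) → ℝ given by f(k) = 4(2 − k²)K(k)²/L² is strictly increasing on (0,1), f(k) → 2π²/L² as k → 0⁺, and f(k) → +∞ as k → 1⁻; consequently f maps (0,1) bijectively onto (2π²/L², +∞). -/
noncomputable def psiAux (x : ℝ) : ℝ := 1 / Real.sqrt (1 + x) + 1 / Real.sqrt (1 - x)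

lemma psiAux_sq {x : ℝ} (hx : x ^ 2 < 1) :
    psiAux x ^ 2 = 2 / (1 - x ^ 2) + 2 / Real.sqrt (1 - x ^ 2) := by
  obtain ⟨h1, h2⟩ := abs_lt.1 ((sq_lt_one_iff_abs_lt_one x).1 hx)
  have ha : 0 < 1 + x := by linarith
  have hb : 0 < 1 - x := by linarith
  have e : (1 - x ^ 2) = (1 + x) * (1 - x) := by ring
  rw [e, Real.sqrt_mul ha.le, psiAux]
  have pa := Real.sqrt_pos.2 ha
  have pb := Real.sqrt_pos.2 hb
  have sa := Real.sq_sqrt ha.le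
  have sb := Real.sq_sqrt hb.le
  set a := Real.sqrt (1 + x)
  set b := Real.sqrt (1 - x)
  rw [← sa, ← sb]
  field_simp
  linear_combination sa + sb

lemma psiAux_lt {x y : ℝ} (hxy : x ^ 2 < y ^ 2) (hy : y ^ 2 < 1) : psiAux x < psiAux y := by
  have h0 : 0 ≤ psiAux y := by unfold psiAux; positivity
  refine lt_of_pow_lt_pow_left₀ 2 h0 ?_
  rw [psiAux_sq hy, psiAux_sq (hxy.trans hy)]
  have p : 0 < 1 - y ^ 2 := by linarith
  have h1 : 2 / (1 - x ^ 2) < 2 / (1 - y ^ 2) :=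
    div_lt_div_of_pos_left (by norm_num) p (by linarith)
  have h2 : 2 / Real.sqrt (1 - x ^ 2) < 2 / Real.sqrt (1 - y ^ 2) :=
    div_lt_div_of_pos_left (by norm_num) (Real.sqrt_pos.2 p)
      (Real.sqrt_lt_sqrt p.le (by linarith))
  linarith

lemma psiAux_le {x y : ℝ} (hxy : x ^ 2 ≤ y ^ 2) (hy : y ^ 2 < 1) : psiAux x ≤ psiAux y := by
  rcases hxy.lt_or_eq with h | h
  · exact (psiAux_lt h hy).le
  · rcases sq_eq_sq_iff_eq_or_eq_neg.1 h with h | h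
    · rw [h]
    · rw [h]; unfold psiAux; rw [sub_neg_eq_add, ← sub_eq_add_neg, add_comm]

lemma tcos_sq_lt {t : ℝ} (h0 : 0 ≤ t) (h1 : t < 1) (θ : ℝ) : (t * Real.cos θ) ^ 2 < 1 := by
  have h2 := Real.cos_sq_le_one θ
  have h3 : t ^ 2 < 1 := by nlinarith
  rw [mul_pow]
  nlinarith [sq_nonneg t, sq_nonneg (Real.cos θ)]

lemma tcos_pos {t : ℝ} (h0 : 0 ≤ t) (h1 : t < 1) (θ : ℝ) :
    0 < 1 + t * Real.cos θ ∧ 0 < 1 - t * Real.cos θ := by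
  obtain ⟨h1, h2⟩ := abs_lt.1 ((sq_lt_one_iff_abs_lt_one _).1 (tcos_sq_lt h0 h1 θ))
  constructor <;> linarith

noncomputable def GAux (t : ℝ) : ℝ :=
  ∫ θ in (0:ℝ)..(Real.pi / 2), 1 / Real.sqrt (1 + t * Real.cos (2 * θ))

lemma cont_one {t : ℝ} (h0 : 0 ≤ t) (h1 : t < 1) :
    Continuous fun θ : ℝ => 1 / Real.sqrt (1 + t * Real.cos (2 * θ)) :=
  continuous_const.div (by fun_prop) fun θ => (Real.sqrt_pos.2 (tcos_pos h0 h1 _).1).ne'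

lemma cont_two {t : ℝ} (h0 : 0 ≤ t) (h1 : t < 1) :
    Continuous fun θ : ℝ => 1 / Real.sqrt (1 - t * Real.cos (2 * θ)) :=
  continuous_const.div (by fun_prop) fun θ => (Real.sqrt_pos.2 (tcos_pos h0 h1 _).2).ne'

lemma GAux_eq {t : ℝ} (h0 : 0 ≤ t) (h1 : t < 1) :
    2 * GAux t = ∫ θ in (0:ℝ)..(Real.pi / 2), psiAux (t * Real.cos (2 * θ)) := by
  have h : GAux t = ∫ θ in (0:ℝ)..(Real.pi / 2), 1 / Real.sqrt (1 - t * Real.cos (2 * θ)) := by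
    have := intervalIntegral.integral_comp_sub_left (a := 0) (b := Real.pi / 2)
      (fun θ : ℝ => 1 / Real.sqrt (1 + t * Real.cos (2 * θ))) (Real.pi / 2)
    simp only [sub_self, sub_zero] at this
    rw [GAux, ← this]
    refine intervalIntegral.integral_congr fun θ _ => ?_
    have e : 2 * (Real.pi / 2 - θ) = Real.pi - 2 * θ := by ring
    simp only [e, Real.cos_pi_sub, mul_neg, ← sub_eq_add_neg]
  rw [two_mul]
  nth_rw 2 [h]
  unfold GAux psiAux
  rw [intervalIntegral.integral_add ((cont_one h0 h1).intervalIntegrable _ _)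
    ((cont_two h0 h1).intervalIntegrable _ _)]

lemma GAux_lt {s t : ℝ} (h0 : 0 ≤ s) (hst : s < t) (h1 : t < 1) : GAux s < GAux t := by
  have hp := Real.pi_pos
  have c : ∀ {t : ℝ}, 0 ≤ t → t < 1 → Continuous fun θ : ℝ => psiAux (t * Real.cos (2 * θ)) :=
    fun h0 h1 => (cont_one h0 h1).add (cont_two h0 h1)
  have ht : 0 ≤ t := h0.trans hst.le
  have hsq : s ^ 2 < t ^ 2 := by nlinarith
  have : 2 * GAux s < 2 * GAux t := by
    rw [GAux_eq h0 (hst.trans h1), GAux_eq ht h1]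
    refine intervalIntegral.integral_lt_integral_of_continuousOn_of_le_of_exists_lt (by positivity)
      (c h0 (hst.trans h1)).continuousOn (c ht h1).continuousOn (fun θ _ => ?_) ⟨0, ?_, ?_⟩
    · refine psiAux_le ?_ (tcos_sq_lt ht h1 _)
      rw [mul_pow, mul_pow]
      exact mul_le_mul_of_nonneg_right hsq.le (sq_nonneg _)
    · exact ⟨le_rfl, by positivity⟩
    · refine psiAux_lt ?_ (tcos_sq_lt ht h1 _)
      simpa using hsq
  linarith

lemma GAux_nonneg (t : ℝ) : 0 ≤ GAux t :=
  intervalIntegral.integral_nonneg (by positivity) fun θ _ => by positivity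

lemma GAux_zero : GAux 0 = Real.pi / 2 := by simp [GAux]

noncomputable def KAux (k : ℝ) : ℝ :=
  ∫ θ in (0:ℝ)..(Real.pi / 2), 1 / Real.sqrt (1 - k ^ 2 * Real.sin θ ^ 2)

lemma KAux_eq {k : ℝ} (hk : k ^ 2 < 1) :
    (2 - k ^ 2) * KAux k ^ 2 = 2 * GAux (k ^ 2 / (2 - k ^ 2)) ^ 2 := by
  have h2 : 0 < (2 - k ^ 2) / 2 := by linarith
  have h3 : (2 - k ^ 2) ≠ 0 := by linarith
  have e : GAux (k ^ 2 / (2 - k ^ 2)) = Real.sqrt ((2 - k ^ 2) / 2) * KAux k := by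
    unfold GAux KAux
    rw [← intervalIntegral.integral_const_mul]
    refine intervalIntegral.integral_congr fun θ _ => ?_
    have : 1 - k ^ 2 * Real.sin θ ^ 2
        = (2 - k ^ 2) / 2 * (1 + k ^ 2 / (2 - k ^ 2) * Real.cos (2 * θ)) := by
      rw [Real.cos_two_mul, Real.cos_sq']
      field_simp
      ring
    simp only [this, Real.sqrt_mul h2.le]
    have := (Real.sqrt_pos.2 h2).ne'
    rw [mul_one_div, div_mul_cancel_left₀ this, one_div]
  rw [e, mul_pow, Real.sq_sqrt h2.le]
  ring

lemma KAux_contAt {k : ℝ} (hk : k ^ 2 < 1) : ContinuousAt KAux k := by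
  obtain ⟨r, hr, hr1⟩ := exists_between hk
  have hc : Continuous fun k : ℝ => ∫ θ in (0:ℝ)..(Real.pi / 2),
      1 / Real.sqrt (max (1 - k ^ 2 * Real.sin θ ^ 2) (1 - r)) := by
    refine intervalIntegral.continuous_parametric_intervalIntegral_of_continuous' ?_ _ _
    refine continuous_const.div (by fun_prop) fun p => (Real.sqrt_pos.2 ?_).ne'
    exact lt_max_of_lt_right (by linarith)
  refine hc.continuousAt.congr ?_
  have : ∀ᶠ x : ℝ in nhds k, x ^ 2 < r :=
    (continuous_pow 2).continuousAt.eventually_lt continuousAt_const hr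
  filter_upwards [this] with x hx
  refine intervalIntegral.integral_congr fun θ _ => ?_
  have h1 := Real.sin_sq_le_one θ
  have : 1 - r ≤ 1 - x ^ 2 * Real.sin θ ^ 2 := by nlinarith [sq_nonneg x]
  simp only [max_eq_left this]

lemma KAux_ge {k : ℝ} (hk : k ^ 2 < 1) :
    Real.log ((Real.sqrt (1 - k ^ 2) + Real.pi / 2) / Real.sqrt (1 - k ^ 2)) ≤ KAux k := by
  have hd0 : 0 < 1 - k ^ 2 := by linarith
  have hd := Real.sqrt_pos.2 hd0
  have hs := Real.sq_sqrt hd0.le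
  set d := Real.sqrt (1 - k ^ 2)
  have hp := Real.pi_pos
  have hK : KAux k = ∫ θ in (0:ℝ)..(Real.pi / 2),
      1 / Real.sqrt (1 - k ^ 2 * Real.cos θ ^ 2) := by
    have := intervalIntegral.integral_comp_sub_left (a := 0) (b := Real.pi / 2)
      (fun θ : ℝ => 1 / Real.sqrt (1 - k ^ 2 * Real.sin θ ^ 2)) (Real.pi / 2)
    simp only [sub_self, sub_zero, Real.sin_pi_div_two_sub] at this
    exact this.symm
  have hl : Real.log ((d + Real.pi / 2) / d) = ∫ θ in (0:ℝ)..(Real.pi / 2), 1 / (d + θ) := by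
    rw [intervalIntegral.integral_comp_add_left (fun x => 1 / x) d, add_zero,
      integral_one_div_of_pos hd (by positivity)]
  have hpos : ∀ θ : ℝ, 0 < 1 - k ^ 2 * Real.cos θ ^ 2 := fun θ => by
    nlinarith [Real.cos_sq_le_one θ, sq_nonneg k]
  rw [hl, hK]
  refine intervalIntegral.integral_mono_on (by positivity) ?_ ?_ fun θ hθ => ?_
  · refine ContinuousOn.intervalIntegrable ?_
    refine continuousOn_const.div (by fun_prop) fun θ hθ => ?_
    rw [Set.uIcc_of_le (by positivity)] at hθ
    linarith [hθ.1]
  · refine Continuous.intervalIntegrable ?_ _ _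
    exact continuous_const.div (by fun_prop) fun θ => (Real.sqrt_pos.2 (hpos θ)).ne'
  · refine one_div_le_one_div_of_le (Real.sqrt_pos.2 (hpos θ)) ?_
    have h0 := hθ.1
    refine Real.sqrt_le_iff.2 ⟨by positivity, ?_⟩
    have h1 : Real.sin θ ^ 2 ≤ θ ^ 2 := Real.sin_sq_le_sq
    rw [Real.cos_sq']
    nlinarith [sq_nonneg (Real.sin θ), mul_nonneg hd.le h0]

lemma KAux_tendsto : Filter.Tendsto KAux (nhdsWithin 1 (Set.Iio 1)) Filter.atTop := by
  have hI : Set.Ioo (0:ℝ) 1 ∈ nhdsWithin (1:ℝ) (Set.Iio 1) := Ioo_mem_nhdsLT one_pos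
  have hsq : ∀ x ∈ Set.Ioo (0:ℝ) 1, x ^ 2 < 1 := fun x hx => by nlinarith [hx.1, hx.2]
  have hd : Filter.Tendsto (fun k : ℝ => Real.sqrt (1 - k ^ 2)) (nhdsWithin 1 (Set.Iio 1))
      (nhdsWithin 0 (Set.Ioi 0)) := by
    refine tendsto_nhdsWithin_iff.2 ⟨?_, ?_⟩
    · have : Continuous fun k : ℝ => Real.sqrt (1 - k ^ 2) := by fun_prop
      have := this.tendsto 1
      simp only [one_pow, sub_self, Real.sqrt_zero] at this
      exact this.mono_left nhdsWithin_le_nhds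
    · filter_upwards [hI] with x hx
      exact Real.sqrt_pos.2 (by linarith [hsq x hx])
  have hq : Filter.Tendsto (fun d : ℝ => Real.log ((d + Real.pi / 2) / d))
      (nhdsWithin 0 (Set.Ioi 0)) Filter.atTop := by
    refine Real.tendsto_log_atTop.comp ?_
    have hp := Real.pi_pos
    refine Filter.Tendsto.pos_mul_atTop (C := Real.pi / 2) (by positivity) ?_
      tendsto_inv_nhdsGT_zero
    have : Continuous fun d : ℝ => d + Real.pi / 2 := by fun_prop
    have := this.tendsto 0
    rw [zero_add] at this
    exact this.mono_left nhdsWithin_le_nhds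
  refine Filter.tendsto_atTop_mono' _ ?_ (hq.comp hd)
  filter_upwards [hI] with x hx
  exact KAux_ge (hsq x hx)


/-- the dnoidal frequency map `f(k) = 4(2−k²)K(k)²/L²` is strictly
increasing on `(0,1)`, tends to `2π²/L²` as `k → 0⁺` and to `+∞` as `k → 1⁻`, and maps
`(0,1)` bijectively onto `(2π²/L², ∞)`. -/
theorem dnoidal_frequency_map
    (L : ℝ) (hL : 0 < L)
    (K : ℝ → ℝ)
    (hK : ∀ k : ℝ, K k = ∫ θ in (0:ℝ)..(Real.pi / 2),
      1 / Real.sqrt (1 - k ^ 2 * Real.sin θ ^ 2))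
    (f : ℝ → ℝ)
    (hf : ∀ k : ℝ, f k = 4 * (2 - k ^ 2) * (K k) ^ 2 / L ^ 2) :
    StrictMonoOn f (Set.Ioo 0 1)
    ∧ Filter.Tendsto f (nhdsWithin 0 (Set.Ioi 0)) (nhds (2 * Real.pi ^ 2 / L ^ 2))
    ∧ Filter.Tendsto f (nhdsWithin 1 (Set.Iio 1)) Filter.atTop
    ∧ Set.BijOn f (Set.Ioo 0 1) (Set.Ioi (2 * Real.pi ^ 2 / L ^ 2)) := by
  obtain rfl : K = KAux := funext hK
  have hL2 : 0 < L ^ 2 := by positivity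
  have hsq : ∀ x ∈ Set.Ico (0:ℝ) 1, x ^ 2 < 1 := fun x hx => by nlinarith [hx.1, hx.2]
  have hfG : ∀ x ∈ Set.Ico (0:ℝ) 1, f x = 8 / L ^ 2 * GAux (x ^ 2 / (2 - x ^ 2)) ^ 2 := by
    intro x hx
    rw [hf, mul_assoc, KAux_eq (hsq x hx)]
    ring
  have hf0 : f 0 = 2 * Real.pi ^ 2 / L ^ 2 := by
    rw [hfG 0 ⟨le_rfl, one_pos⟩]
    norm_num [GAux_zero]
    ring
  have hmono : StrictMonoOn f (Set.Ico 0 1) := by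
    intro x hx y hy hxy
    rw [hfG x hx, hfG y hy]
    have h1 := hsq x hx
    have h2 := hsq y hy
    have h3 : x ^ 2 < y ^ 2 := by nlinarith [hx.1]
    refine mul_lt_mul_of_pos_left (pow_lt_pow_left₀ ?_ (GAux_nonneg _) two_ne_zero) (by positivity)
    refine GAux_lt (div_nonneg (sq_nonneg _) (by linarith)) ?_ ?_
    · rw [div_lt_div_iff₀ (by linarith) (by linarith)]
      nlinarith
    · rw [div_lt_one (by linarith)]
      linarith
  have hcont : ∀ x ∈ Set.Ico (0:ℝ) 1, ContinuousAt f x := by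
    intro x hx
    have := KAux_contAt (hsq x hx)
    rw [funext hf]
    fun_prop
  have htop : Filter.Tendsto f (nhdsWithin 1 (Set.Iio 1)) Filter.atTop := by
    have hI : Set.Ioo (0:ℝ) 1 ∈ nhdsWithin (1:ℝ) (Set.Iio 1) := Ioo_mem_nhdsLT one_pos
    have h1 : Filter.Tendsto (fun k => 4 / L ^ 2 * KAux k ^ 2) (nhdsWithin 1 (Set.Iio 1))
        Filter.atTop :=
      ((Filter.tendsto_pow_atTop two_ne_zero).comp KAux_tendsto).const_mul_atTop (by positivity)
    refine Filter.tendsto_atTop_mono' _ ?_ h1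
    filter_upwards [hI] with x hx
    rw [hf, div_mul_eq_mul_div]
    refine div_le_div_of_nonneg_right ?_ hL2.le
    nlinarith [hsq x ⟨hx.1.le, hx.2⟩, sq_nonneg (KAux x)]
  have hsub : Set.Ioo (0:ℝ) 1 ⊆ Set.Ico 0 1 := Set.Ioo_subset_Ico_self
  have h00 : (0:ℝ) ∈ Set.Ico (0:ℝ) 1 := ⟨le_rfl, one_pos⟩
  refine ⟨hmono.mono hsub, ?_, htop, ?_, (hmono.mono hsub).injOn, ?_⟩
  · rw [← hf0]
    exact (hcont 0 h00).tendsto.mono_left nhdsWithin_le_nhds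
  · intro x hx
    rw [← hf0]
    exact hmono h00 (hsub hx) hx.1
  · intro y hy
    rw [← hf0] at hy
    have hI : Set.Ioo (0:ℝ) 1 ∈ nhdsWithin (1:ℝ) (Set.Iio 1) := Ioo_mem_nhdsLT one_pos
    obtain ⟨b, hb, hyb⟩ := ((Filter.eventually_of_mem hI fun _ h => h).and
      (htop.eventually_gt_atTop y)).exists
    obtain ⟨x, hx, rfl⟩ := intermediate_value_Icc hb.1.le
      (fun z hz => (hcont z ⟨hz.1, hz.2.trans_lt hb.2⟩).continuousWithinAt) ⟨le_of_lt hy, hyb.le⟩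
    refine ⟨x, ⟨lt_of_le_of_ne hx.1 ?_, hx.2.trans_lt hb.2⟩, rfl⟩
    rintro rfl
    exact lt_irrefl _ (Set.mem_Ioi.1 hy)
end

section
/- Let L > 0 and define K(k) = ∫₀^{π/2} (1 − k² sin²θ)^{−1/2} dθ for k ∈ (0,1). Then the function g : (1/√2, 1) → ℝ given by g(k) = 16 K(k)² (2k² − 1)/L² is strictly increasing on (1/√2, 1), g(k) → 0 as k → (1/√2)⁺, and g(k) → +∞ as k → 1⁻; consequently g maps (1/√2, 1) bijectively onto (0, +∞). -/
lemma cn_pos {k : ℝ} (h0 : 0 ≤ k) (h1 : k < 1) (θ : ℝ) :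
    0 < 1 - k ^ 2 * Real.sin θ ^ 2 := by
  have := Real.sin_sq_le_one θ
  have h2 : k ^ 2 < 1 := by nlinarith
  nlinarith [sq_nonneg k, sq_nonneg (Real.sin θ)]

lemma cn_cont {k : ℝ} (h0 : 0 ≤ k) (h1 : k < 1) :
    Continuous (fun θ : ℝ => 1 / Real.sqrt (1 - k ^ 2 * Real.sin θ ^ 2)) := by
  refine Continuous.div continuous_const (by fun_prop) fun θ => ?_
  exact (Real.sqrt_pos.2 (cn_pos h0 h1 θ)).ne'

lemma cn_K_mono {a b : ℝ} (h0 : 0 ≤ a) (hab : a ≤ b) (h1 : b < 1) :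
    (∫ θ in (0:ℝ)..(Real.pi / 2), 1 / Real.sqrt (1 - a ^ 2 * Real.sin θ ^ 2)) ≤
    ∫ θ in (0:ℝ)..(Real.pi / 2), 1 / Real.sqrt (1 - b ^ 2 * Real.sin θ ^ 2) := by
  apply intervalIntegral.integral_mono_on (by positivity)
  · exact (cn_cont h0 (by linarith)).intervalIntegrable _ _
  · exact (cn_cont (by linarith) h1).intervalIntegrable _ _
  · intro θ _
    apply one_div_le_one_div_of_le (Real.sqrt_pos.2 (cn_pos (by linarith) h1 θ))
    apply Real.sqrt_le_sqrt
    have : a ^ 2 ≤ b ^ 2 := by gcongr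
    nlinarith [sq_nonneg (Real.sin θ)]

lemma cn_K_pos {k : ℝ} (h0 : 0 ≤ k) (h1 : k < 1) :
    0 < ∫ θ in (0:ℝ)..(Real.pi / 2), 1 / Real.sqrt (1 - k ^ 2 * Real.sin θ ^ 2) := by
  apply intervalIntegral.intervalIntegral_pos_of_pos
  · exact (cn_cont h0 h1).intervalIntegrable _ _
  · intro θ
    exact one_div_pos.2 (Real.sqrt_pos.2 (cn_pos h0 h1 θ))
  · positivity

lemma cn_K_contAt {k : ℝ} (h0 : 0 < k) (h1 : k < 1) :
    ContinuousAt (fun k : ℝ => ∫ θ in (0:ℝ)..(Real.pi / 2),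
      1 / Real.sqrt (1 - k ^ 2 * Real.sin θ ^ 2)) k := by
  obtain ⟨b, hb, hb1⟩ := exists_between h1
  have hb2 : 0 < 1 - b ^ 2 := by nlinarith
  have hc : Continuous (fun k : ℝ => ∫ θ in (0:ℝ)..(Real.pi / 2),
      1 / Real.sqrt (max (1 - k ^ 2 * Real.sin θ ^ 2) (1 - b ^ 2))) := by
    apply intervalIntegral.continuous_parametric_intervalIntegral_of_continuous'
    refine Continuous.div continuous_const (by fun_prop) fun p => ?_
    exact (Real.sqrt_pos.2 (lt_max_of_lt_right hb2)).ne'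
  refine hc.continuousAt.congr ?_
  filter_upwards [Ioo_mem_nhds h0 hb] with x hx
  congr 1
  ext θ
  rw [max_eq_left]
  have := Real.sin_sq_le_one θ
  have : x ^ 2 ≤ b ^ 2 := by have := hx.1.le; have := hx.2.le; gcongr
  nlinarith [sq_nonneg x]

lemma cn_K_lower {k : ℝ} (h0 : 0 ≤ k) (h1 : k < 1) :
    - Real.log (Real.sqrt (1 - k ^ 2)) ≤
      ∫ θ in (0:ℝ)..(Real.pi / 2), 1 / Real.sqrt (1 - k ^ 2 * Real.sin θ ^ 2) := by
  have hk : 0 < 1 - k ^ 2 := by nlinarith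
  set e := Real.sqrt (1 - k ^ 2) with he
  have hep : 0 < e := Real.sqrt_pos.2 hk
  have hee : e ^ 2 = 1 - k ^ 2 := Real.sq_sqrt hk.le
  have hpi := Real.pi_gt_three
  have hI : ∫ θ in (0:ℝ)..(Real.pi / 2), 1 / ((Real.pi / 2 + e) - θ)
      = Real.log ((Real.pi / 2 + e) / e) := by
    rw [intervalIntegral.integral_comp_sub_left (fun x => 1 / x) (Real.pi / 2 + e)]
    rw [integral_one_div_of_pos (by linarith) (by linarith)]
    congr 2 <;> ring
  calc - Real.log e ≤ Real.log ((Real.pi / 2 + e) / e) := by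
        rw [← Real.log_inv]
        apply Real.log_le_log (by positivity)
        rw [inv_eq_one_div]
        gcongr
        linarith
    _ = _ := hI.symm
    _ ≤ _ := by
      apply intervalIntegral.integral_mono_on (by positivity)
      · apply ContinuousOn.intervalIntegrable
        refine ContinuousOn.div continuousOn_const (by fun_prop) fun θ hθ => ?_
        rw [Set.uIcc_of_le (by positivity)] at hθ
        have := hθ.2
        linarith
      · exact (cn_cont h0 h1).intervalIntegrable _ _
      · intro θ hθ
        have h2 := hθ.2
        apply one_div_le_one_div_of_le (Real.sqrt_pos.2 (cn_pos h0 h1 θ))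
        apply Real.sqrt_le_iff.2 ⟨by linarith, ?_⟩
        have hc : Real.cos θ ≤ Real.pi / 2 - θ := by
          rw [← Real.sin_pi_div_two_sub]
          exact Real.sin_le (by linarith)
        have hc0 : 0 ≤ Real.cos θ := Real.cos_nonneg_of_mem_Icc ⟨by linarith [hθ.1], h2⟩
        have hs := Real.sin_sq_add_cos_sq θ
        have hcc : Real.cos θ ^ 2 ≤ (Real.pi / 2 - θ) ^ 2 := by gcongr
        have hse : e ^ 2 * Real.sin θ ^ 2 ≤ e ^ 2 := by
          nlinarith [Real.sin_sq_le_one θ, sq_nonneg e]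
        have hx : 0 ≤ (Real.pi / 2 - θ) * e := mul_nonneg (by linarith) hep.le
        have hk2 : k ^ 2 = 1 - e ^ 2 := by linarith
        rw [hk2]
        nlinarith

/-- the cnoidal frequency map `g(k) = 16K(k)²(2k²−1)/L²` is strictly
increasing on `(1/√2, 1)`, tends to `0` as `k → (1/√2)⁺` and to `+∞` as `k → 1⁻`, and
maps `(1/√2, 1)` bijectively onto `(0, ∞)`. -/
theorem cnoidal_frequency_map
    (L : ℝ) (hL : 0 < L)
    (K : ℝ → ℝ)
    (hK : ∀ k : ℝ, K k = ∫ θ in (0:ℝ)..(Real.pi / 2),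
      1 / Real.sqrt (1 - k ^ 2 * Real.sin θ ^ 2))
    (g : ℝ → ℝ)
    (hg : ∀ k : ℝ, g k = 16 * (K k) ^ 2 * (2 * k ^ 2 - 1) / L ^ 2) :
    StrictMonoOn g (Set.Ioo (1 / Real.sqrt 2) 1)
    ∧ Filter.Tendsto g (nhdsWithin (1 / Real.sqrt 2) (Set.Ioi (1 / Real.sqrt 2))) (nhds 0)
    ∧ Filter.Tendsto g (nhdsWithin 1 (Set.Iio 1)) Filter.atTop
    ∧ Set.BijOn g (Set.Ioo (1 / Real.sqrt 2) 1) (Set.Ioi 0) := by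
  have hs2 : (0:ℝ) < Real.sqrt 2 := by positivity
  have hsq : (1 / Real.sqrt 2) ^ 2 = 1 / 2 := by
    rw [div_pow, Real.sq_sqrt (by norm_num)]; norm_num
  set c := 1 / Real.sqrt 2 with hc
  have hc0 : 0 < c := by positivity
  have hc1 : c < 1 := by nlinarith
  have hKpos : ∀ k, 0 ≤ k → k < 1 → 0 < K k := fun k h0 h1 => by
    rw [hK]; exact cn_K_pos h0 h1
  have hKmono : ∀ a b, 0 ≤ a → a ≤ b → b < 1 → K a ≤ K b := fun a b h0 h h1 => by
    rw [hK, hK]; exact cn_K_mono h0 h h1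
  have hKc : ∀ k, 0 < k → k < 1 → ContinuousAt K k := fun k h0 h1 => by
    rw [funext hK]; exact cn_K_contAt h0 h1
  have hgc : ∀ k, 0 < k → k < 1 → ContinuousAt g k := fun k h0 h1 => by
    have := hKc k h0 h1
    rw [funext hg]
    fun_prop
  have hmono : StrictMonoOn g (Set.Ioo c 1) := by
    intro a ha b hb hab
    have ha0 : 0 < a := hc0.trans ha.1
    have h1 := hKpos a ha0.le ha.2
    have h2 := hKmono a b ha0.le hab.le hb.2
    have h3 : 1 / 2 < a ^ 2 := by rw [← hsq]; have := ha.1; gcongr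
    have h4 : a ^ 2 < b ^ 2 := by gcongr
    have h5 : K a ^ 2 ≤ K b ^ 2 := by gcongr
    have h6 : 0 < K a ^ 2 := by positivity
    rw [hg, hg]
    apply div_lt_div_of_pos_right _ (by positivity)
    nlinarith
  have hlim0 : Filter.Tendsto g (nhdsWithin c (Set.Ioi c)) (nhds 0) := by
    have h := (hgc c hc0 hc1).tendsto
    have h0 : g c = 0 := by rw [hg, hsq]; norm_num
    rw [h0] at h
    exact h.mono_left nhdsWithin_le_nhds
  have hev : ∀ᶠ k in nhdsWithin (1:ℝ) (Set.Iio 1), k ∈ Set.Ioo c 1 :=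
    Ioo_mem_nhdsLT hc1
  have hKlim : Filter.Tendsto K (nhdsWithin 1 (Set.Iio 1)) Filter.atTop := by
    have hs : Filter.Tendsto (fun k : ℝ => Real.sqrt (1 - k ^ 2))
        (nhdsWithin 1 (Set.Iio 1)) (nhdsWithin 0 (Set.Ioi 0)) := by
      apply tendsto_nhdsWithin_of_tendsto_nhds_of_eventually_within
      · have hcont : Continuous (fun k : ℝ => Real.sqrt (1 - k ^ 2)) := by fun_prop
        have h := hcont.tendsto 1
        norm_num at h
        exact h.mono_left nhdsWithin_le_nhds
      · filter_upwards [hev] with k hk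
        have := hk.1
        have := hk.2
        exact Real.sqrt_pos.2 (by nlinarith)
    have hl := Filter.tendsto_neg_atBot_atTop.comp (Real.tendsto_log_nhdsGT_zero.comp hs)
    refine Filter.tendsto_atTop_mono' _ ?_ hl
    filter_upwards [hev] with k hk
    rw [hK]
    exact cn_K_lower (hc0.trans hk.1).le hk.2
  have hlim1 : Filter.Tendsto g (nhdsWithin 1 (Set.Iio 1)) Filter.atTop := by
    have h1 : Filter.Tendsto (fun k => K k ^ 2) (nhdsWithin 1 (Set.Iio 1)) Filter.atTop :=
      (Filter.tendsto_pow_atTop two_ne_zero).comp hKlim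
    have h2 : Filter.Tendsto (fun k : ℝ => 16 * (2 * k ^ 2 - 1) / L ^ 2)
        (nhdsWithin 1 (Set.Iio 1)) (nhds (16 * (2 * 1 ^ 2 - 1) / L ^ 2)) := by
      have hcont : Continuous (fun k : ℝ => 16 * (2 * k ^ 2 - 1) / L ^ 2) := by fun_prop
      exact (hcont.tendsto 1).mono_left nhdsWithin_le_nhds
    have h3 := h1.atTop_mul_pos (by norm_num; positivity) h2
    refine h3.congr fun k => ?_
    rw [hg]; ring
  refine ⟨hmono, hlim0, hlim1, ?_, hmono.injOn, ?_⟩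
  · intro k hk
    have h1 := hKpos k (hc0.trans hk.1).le hk.2
    have h3 : 1 / 2 < k ^ 2 := by rw [← hsq]; have := hk.1; gcongr
    have h4 : 0 < 2 * k ^ 2 - 1 := by linarith
    rw [Set.mem_Ioi, hg]
    positivity
  · refine isPreconnected_Ioo.intermediate_value_Ioi
      (l₁ := nhdsWithin c (Set.Ioi c)) (l₂ := nhdsWithin 1 (Set.Iio 1)) ?_ ?_ ?_ hlim0 hlim1
    · exact Filter.le_principal_iff.2 (Ioo_mem_nhdsGT hc1)
    · exact Filter.le_principal_iff.2 hev
    · exact fun k hk => (hgc k (hc0.trans hk.1) hk.2).continuousWithinAt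
end

section
/- Define K(k) = ∫₀^{π/2} (1 − k² sin²θ)^{−1/2} dθ and E(k) = ∫₀^{π/2} (1 − k² sin²θ)^{1/2} dθ for k ∈ (0,1). Then the function k ↦ E(k)·K(k) is differentiable on (0,1) and its derivative is strictly positive for every k ∈ (0,1). -/
lemma EK_delta_pos {k θ : ℝ} (hk : |k| < 1) : 0 < 1 - k ^ 2 * Real.sin θ ^ 2 := by
  have h1 : k ^ 2 < 1 := by
    rw [← sq_abs]; nlinarith [abs_nonneg k]
  nlinarith [Real.sin_sq_le_one θ, sq_nonneg (Real.sin θ), sq_nonneg k]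

lemma EK_param (F F' : ℝ → ℝ → ℝ)
    (hF : ∀ k : ℝ, |k| < 1 → Continuous (F k))
    (hF' : ContinuousOn (fun p : ℝ × ℝ => F' p.1 p.2) {p | |p.1| < 1})
    (hd : ∀ k : ℝ, |k| < 1 → ∀ θ, HasDerivAt (fun x => F x θ) (F' k θ) k)
    (k : ℝ) (hk : |k| < 1) :
    HasDerivAt (fun x => ∫ θ in (0:ℝ)..(Real.pi / 2), F x θ)
      (∫ θ in (0:ℝ)..(Real.pi / 2), F' k θ) k := by
  obtain ⟨r, hr1, hr2⟩ := exists_between hk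
  have hcomp : IsCompact (Set.Icc (-r) r ×ˢ Set.uIcc (0:ℝ) (Real.pi / 2)) :=
    isCompact_Icc.prod isCompact_uIcc
  obtain ⟨C, hC⟩ := hcomp.exists_bound_of_continuousOn (f := fun p : ℝ × ℝ => F' p.1 p.2)
    (hF'.mono (by
      rintro ⟨x, y⟩ ⟨hx, -⟩
      exact (abs_le.2 hx).trans_lt hr2))
  have hcont : Continuous (F' k) := by
    have : ContinuousOn (fun y : ℝ => F' k y) Set.univ :=
      hF'.comp (f := fun y : ℝ => (k, y)) (by fun_prop) (fun y _ => hk)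
    exact continuousOn_univ.1 this
  have hs : Set.Ioo (-r) r ∈ nhds k := Ioo_mem_nhds (abs_lt.1 hr1).1 (abs_lt.1 hr1).2
  refine (intervalIntegral.hasDerivAt_integral_of_dominated_loc_of_deriv_le
    (F := F) (F' := F') (bound := fun _ => C) (s := Set.Ioo (-r) r) hs ?_ ?_ ?_ ?_ ?_ ?_).2
  · filter_upwards [hs] with x hx
    exact (hF x ((abs_lt.2 hx).trans hr2)).aestronglyMeasurable
  · exact (hF k hk).intervalIntegrable _ _
  · exact hcont.aestronglyMeasurable
  · refine Filter.Eventually.of_forall fun t ht x hx => ?_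
    exact hC (x, t) ⟨Set.Ioo_subset_Icc_self hx, Set.uIoc_subset_uIcc ht⟩
  · exact intervalIntegrable_const
  · refine Filter.Eventually.of_forall fun t _ x hx => ?_
    exact hd x ((abs_lt.2 hx).trans hr2) t

/-- `k ↦ E(k)K(k)` is differentiable on `(0,1)` with strictly positive
derivative, where `K`, `E` are the complete elliptic integrals of the first and
second kind. -/
theorem EK_strict_derivative_pos
    (K E : ℝ → ℝ)
    (hK : ∀ k : ℝ, K k = ∫ θ in (0:ℝ)..(Real.pi / 2),
      1 / Real.sqrt (1 - k ^ 2 * Real.sin θ ^ 2))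
    (hE : ∀ k : ℝ, E k = ∫ θ in (0:ℝ)..(Real.pi / 2),
      Real.sqrt (1 - k ^ 2 * Real.sin θ ^ 2)) :
    ∀ k ∈ Set.Ioo (0:ℝ) 1,
      DifferentiableAt ℝ (fun k => E k * K k) k
      ∧ 0 < deriv (fun k => E k * K k) k := by
  rintro k ⟨hk0, hk1⟩
  have hk : |k| < 1 := by rwa [abs_of_pos hk0]
  have hpos : ∀ x : ℝ, |x| < 1 → ∀ θ, 0 < Real.sqrt (1 - x ^ 2 * Real.sin θ ^ 2) :=
    fun x hx θ => Real.sqrt_pos.2 (EK_delta_pos hx)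
  have hne : ∀ x : ℝ, |x| < 1 → ∀ θ, Real.sqrt (1 - x ^ 2 * Real.sin θ ^ 2) ≠ 0 :=
    fun x hx θ => (hpos x hx θ).ne'
  have hsq : ∀ x : ℝ, |x| < 1 → ∀ θ,
      Real.sqrt (1 - x ^ 2 * Real.sin θ ^ 2) ^ 2 = 1 - x ^ 2 * Real.sin θ ^ 2 :=
    fun x hx θ => Real.sq_sqrt (EK_delta_pos hx).le
  have hdE : ∀ x : ℝ, |x| < 1 → ∀ θ, HasDerivAt
      (fun x => Real.sqrt (1 - x ^ 2 * Real.sin θ ^ 2))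
      (-(x * Real.sin θ ^ 2) / Real.sqrt (1 - x ^ 2 * Real.sin θ ^ 2)) x := by
    intro x hx θ
    have h1 : HasDerivAt (fun x : ℝ => 1 - x ^ 2 * Real.sin θ ^ 2)
        (-(2 * x * Real.sin θ ^ 2)) x := by
      have := (((hasDerivAt_id x).pow 2).mul_const (Real.sin θ ^ 2)).const_sub 1
      simpa using this
    convert h1.sqrt (EK_delta_pos hx).ne' using 1
    have := hne x hx θ
    field_simp
  have hdK : ∀ x : ℝ, |x| < 1 → ∀ θ, HasDerivAt
      (fun x => 1 / Real.sqrt (1 - x ^ 2 * Real.sin θ ^ 2))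
      ((x * Real.sin θ ^ 2) / Real.sqrt (1 - x ^ 2 * Real.sin θ ^ 2) ^ 3) x := by
    intro x hx θ
    have h := (hdE x hx θ).fun_inv (hne x hx θ)
    simp only [one_div]
    have e : (x * Real.sin θ ^ 2) / Real.sqrt (1 - x ^ 2 * Real.sin θ ^ 2) ^ 3
        = -(-(x * Real.sin θ ^ 2) / Real.sqrt (1 - x ^ 2 * Real.sin θ ^ 2))
          / Real.sqrt (1 - x ^ 2 * Real.sin θ ^ 2) ^ 2 := by
      rw [← neg_div, neg_neg, div_div]
      congr 1
      ring
    rw [e]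
    exact h
  have hcE : Continuous fun θ => Real.sqrt (1 - k ^ 2 * Real.sin θ ^ 2) := by fun_prop
  have DE := EK_param (fun x θ => Real.sqrt (1 - x ^ 2 * Real.sin θ ^ 2))
    (fun x θ => -(x * Real.sin θ ^ 2) / Real.sqrt (1 - x ^ 2 * Real.sin θ ^ 2))
    (fun x hx => by fun_prop)
    (ContinuousOn.div (by fun_prop) (by fun_prop) (fun p hp => hne p.1 hp p.2)) hdE k hk
  have DK := EK_param (fun x θ => 1 / Real.sqrt (1 - x ^ 2 * Real.sin θ ^ 2))
    (fun x θ => (x * Real.sin θ ^ 2) / Real.sqrt (1 - x ^ 2 * Real.sin θ ^ 2) ^ 3)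
    (fun x hx => Continuous.div (by fun_prop) (by fun_prop) (hne x hx))
    (ContinuousOn.div (by fun_prop) (by fun_prop)
      (fun p hp => pow_ne_zero 3 (hne p.1 hp p.2))) hdK k hk
  rw [← funext hE] at DE
  rw [← funext hK] at DK
  have H := DE.mul DK
  refine ⟨H.differentiableAt, ?_⟩
  rw [show deriv (fun k => E k * K k) k = _ from H.deriv]
  have hcK : Continuous fun θ => 1 / Real.sqrt (1 - k ^ 2 * Real.sin θ ^ 2) :=
    Continuous.div (by fun_prop) (by fun_prop) (hne k hk)
  have hcD : Continuous fun θ => 1 / Real.sqrt (1 - k ^ 2 * Real.sin θ ^ 2) ^ 3 :=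
    Continuous.div (by fun_prop) (by fun_prop) (fun θ => pow_ne_zero 3 (hne k hk θ))
  set D : ℝ := ∫ θ in (0:ℝ)..(Real.pi / 2), 1 / Real.sqrt (1 - k ^ 2 * Real.sin θ ^ 2) ^ 3 with hD
  have e1 : (∫ θ in (0:ℝ)..(Real.pi / 2),
      -(k * Real.sin θ ^ 2) / Real.sqrt (1 - k ^ 2 * Real.sin θ ^ 2)) = (E k - K k) / k := by
    rw [hE, hK, ← intervalIntegral.integral_sub (hcE.intervalIntegrable _ _)
      (hcK.intervalIntegrable _ _), ← intervalIntegral.integral_div]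
    congr 1; funext θ
    have h1 := hne k hk θ
    have h2 := hsq k hk θ
    generalize Real.sqrt (1 - k ^ 2 * Real.sin θ ^ 2) = d at *
    field_simp
    linear_combination -h2
  have e2 : (∫ θ in (0:ℝ)..(Real.pi / 2),
      (k * Real.sin θ ^ 2) / Real.sqrt (1 - k ^ 2 * Real.sin θ ^ 2) ^ 3) = (D - K k) / k := by
    rw [hD, hK, ← intervalIntegral.integral_sub (hcD.intervalIntegrable _ _)
      (hcK.intervalIntegrable _ _), ← intervalIntegral.integral_div]
    congr 1; funext θ
    have h1 := hne k hk θ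
    have h2 := hsq k hk θ
    generalize Real.sqrt (1 - k ^ 2 * Real.sin θ ^ 2) = d at *
    field_simp
    linear_combination h2
  have hpi : (0:ℝ) < Real.pi / 2 := by positivity
  have hEpos : 0 < E k := by
    rw [hE]
    exact intervalIntegral.intervalIntegral_pos_of_pos (hcE.intervalIntegrable _ _)
      (hpos k hk) hpi
  have key : ∀ t : ℝ, 0 < D - 2 * t * K k + t ^ 2 * E k := by
    intro t
    have e3 : D - 2 * t * K k + t ^ 2 * E k = ∫ θ in (0:ℝ)..(Real.pi / 2),
        (1 - t * Real.sqrt (1 - k ^ 2 * Real.sin θ ^ 2) ^ 2) ^ 2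
          / Real.sqrt (1 - k ^ 2 * Real.sin θ ^ 2) ^ 3 := by
      rw [hD, hK, hE, ← intervalIntegral.integral_const_mul, ← intervalIntegral.integral_const_mul,
        ← intervalIntegral.integral_sub (hcD.intervalIntegrable _ _)
          ((hcK.const_mul _).intervalIntegrable _ _),
        ← intervalIntegral.integral_add
          (f := fun θ => 1 / Real.sqrt (1 - k ^ 2 * Real.sin θ ^ 2) ^ 3
            - 2 * t * (1 / Real.sqrt (1 - k ^ 2 * Real.sin θ ^ 2)))
          ((hcD.intervalIntegrable _ _).sub
          ((hcK.const_mul _).intervalIntegrable _ _))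
          ((hcE.const_mul _).intervalIntegrable _ _)]
      congr 1; funext θ
      have h1 := hne k hk θ
      generalize Real.sqrt (1 - k ^ 2 * Real.sin θ ^ 2) = d at *
      field_simp
      ring
    rw [e3]
    refine intervalIntegral.integral_pos hpi ?_ ?_ ?_
    · exact (Continuous.div (by fun_prop) (by fun_prop)
        (fun θ => pow_ne_zero 3 (hne k hk θ))).continuousOn
    · intro θ _
      have := hpos k hk θ
      positivity
    · have hk2 : 0 < k ^ 2 := by positivity
      by_cases ht : t = 1
      · refine ⟨Real.pi / 2, ⟨hpi.le, le_rfl⟩, ?_⟩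
        have := hpos k hk (Real.pi / 2)
        refine div_pos ?_ (by positivity)
        rw [hsq k hk, ht, Real.sin_pi_div_two]
        have : 1 - 1 * (1 - k ^ 2 * 1 ^ 2) = k ^ 2 := by ring
        rw [this]; positivity
      · refine ⟨0, ⟨le_rfl, hpi.le⟩, ?_⟩
        have := hpos k hk 0
        refine div_pos ?_ (by positivity)
        rw [hsq k hk, Real.sin_zero]
        have : 1 - t ≠ 0 := sub_ne_zero.2 (Ne.symm ht)
        have h2 : 1 - t * (1 - k ^ 2 * 0 ^ 2) = 1 - t := by ring
        rw [h2]; positivity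
  have h := mul_pos hEpos (key (K k / E k))
  have h4 : E k * (D - 2 * (K k / E k) * K k + (K k / E k) ^ 2 * E k) = E k * D - K k ^ 2 := by
    field_simp; ring
  rw [h4] at h
  rw [e1, e2]
  have h5 : (E k - K k) / k * K k + E k * ((D - K k) / k) = (E k * D - K k ^ 2) / k := by
    field_simp; ring
  rw [h5]
  exact div_pos h hk0
end

section
/- Define K(k) = ∫₀^{π/2} (1 − k² sin²θ)^{−1/2} dθ and E(k) = ∫₀^{π/2} (1 − k² sin²θ)^{1/2} dθ for k ∈ (0,1). Then the function k ↦ K(k)·(E(k) − (1 − k²)K(k)) is differentiable on (0,1) and its derivative is strictly positive for every k ∈ (0,1). -/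
open Real Set Filter Topology MeasureTheory

lemma ell_D_ge {x m : ℝ} (hx0 : 0 < x) (hxm : x < m) (θ : ℝ) :
    1 - m ^ 2 ≤ 1 - x ^ 2 * sin θ ^ 2 := by
  have h1 : sin θ ^ 2 ≤ 1 := sin_sq_le_one θ
  have h2 : 0 ≤ sin θ ^ 2 := sq_nonneg _
  nlinarith [mul_nonneg (sq_nonneg x) (sub_nonneg.2 h1)]

lemma ell_D_pos {x : ℝ} (hx0 : 0 < x) (hx1 : x < 1) (θ : ℝ) :
    0 < 1 - x ^ 2 * sin θ ^ 2 := by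
  have h1 : sin θ ^ 2 ≤ 1 := sin_sq_le_one θ
  nlinarith [mul_nonneg (sq_nonneg x) (sub_nonneg.2 h1)]

lemma ell_deriv_E {x : ℝ} (hx0 : 0 < x) (hx1 : x < 1) (θ : ℝ) :
    HasDerivAt (fun x : ℝ => √(1 - x ^ 2 * sin θ ^ 2))
      (-(x * sin θ ^ 2) / √(1 - x ^ 2 * sin θ ^ 2)) x := by
  have hD := ell_D_pos hx0 hx1 θ
  have h : HasDerivAt (fun x : ℝ => 1 - x ^ 2 * sin θ ^ 2) (-(2 * x * sin θ ^ 2)) x := by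
    have := (((hasDerivAt_id x).pow 2).mul_const (sin θ ^ 2)).const_sub 1
    simpa using this
  have h2 := h.sqrt hD.ne'
  convert h2 using 1
  have := sqrt_pos.2 hD
  field_simp

lemma ell_deriv_K {x : ℝ} (hx0 : 0 < x) (hx1 : x < 1) (θ : ℝ) :
    HasDerivAt (fun x : ℝ => 1 / √(1 - x ^ 2 * sin θ ^ 2))
      (x * sin θ ^ 2 / √(1 - x ^ 2 * sin θ ^ 2) ^ 3) x := by
  have hD := ell_D_pos hx0 hx1 θ
  have hs := sqrt_pos.2 hD
  have h2 := (ell_deriv_E hx0 hx1 θ).inv hs.ne'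
  simp only [one_div]
  refine HasDerivAt.congr_deriv (f := fun x : ℝ => (√(1 - x ^ 2 * sin θ ^ 2))⁻¹) h2 ?_
  generalize √(1 - x ^ 2 * sin θ ^ 2) = r at hs
  field_simp

lemma ell_cont {x : ℝ} (hx0 : 0 < x) (hx1 : x < 1) (f : ℝ → ℝ) (hf : Continuous f) (n : ℕ) :
    Continuous (fun θ => f θ / √(1 - x ^ 2 * sin θ ^ 2) ^ n) := by
  refine hf.div (by fun_prop) fun θ => ?_
  exact pow_ne_zero _ (sqrt_pos.2 (ell_D_pos hx0 hx1 θ)).ne'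

lemma ell_num_bound {x : ℝ} (hx0 : 0 < x) (hx1 : x < 1) (θ : ℝ) : |x * sin θ ^ 2| ≤ 1 := by
  have h1 : sin θ ^ 2 ≤ 1 := sin_sq_le_one θ
  have h2 : 0 ≤ sin θ ^ 2 := sq_nonneg _
  rw [abs_of_nonneg (by positivity)]
  nlinarith

lemma ell_bound {x m : ℝ} (hx0 : 0 < x) (hxm : x < m) (hm : m < 1) (θ a : ℝ)
    (ha : |a| ≤ 1) (n : ℕ) :
    ‖a / √(1 - x ^ 2 * sin θ ^ 2) ^ n‖ ≤ 1 / √(1 - m ^ 2) ^ n := by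
  have hD := ell_D_ge hx0 hxm θ
  have hm0 : 0 < 1 - m ^ 2 := by nlinarith
  have hs := sqrt_pos.2 hm0
  have hle := sqrt_le_sqrt hD
  rw [norm_div, Real.norm_eq_abs, Real.norm_eq_abs,
    abs_of_nonneg (a := √(1 - x ^ 2 * sin θ ^ 2) ^ n) (by positivity)]
  gcongr

lemma ell_hasDeriv_K {k : ℝ} (hk0 : 0 < k) (hk1 : k < 1) :
    HasDerivAt (fun x : ℝ => ∫ θ in (0:ℝ)..(π / 2), 1 / √(1 - x ^ 2 * sin θ ^ 2))
      (∫ θ in (0:ℝ)..(π / 2), k * sin θ ^ 2 / √(1 - k ^ 2 * sin θ ^ 2) ^ 3) k := by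
  obtain ⟨m, hkm, hm⟩ := exists_between hk1
  have hs : Ioo 0 m ∈ 𝓝 k := Ioo_mem_nhds hk0 hkm
  have hc : ∀ x ∈ Ioo 0 m, Continuous (fun θ => 1 / √(1 - x ^ 2 * sin θ ^ 2)) := fun x hx => by
    simpa using ell_cont hx.1 (hx.2.trans hm) (fun _ => 1) continuous_const 1
  refine (intervalIntegral.hasDerivAt_integral_of_dominated_loc_of_deriv_le
    (F := fun x θ => 1 / √(1 - x ^ 2 * sin θ ^ 2))
    (F' := fun x θ => x * sin θ ^ 2 / √(1 - x ^ 2 * sin θ ^ 2) ^ 3)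
    (bound := fun _ => 1 / √(1 - m ^ 2) ^ 3) hs ?_ ?_ ?_ ?_ ?_ ?_).2
  · filter_upwards [hs] with x hx
    exact (hc x hx).aestronglyMeasurable
  · exact (hc k ⟨hk0, hkm⟩).intervalIntegrable _ _
  · exact (ell_cont hk0 hk1 (fun θ => k * sin θ ^ 2) (by fun_prop) 3).aestronglyMeasurable
  · refine ae_of_all _ fun θ _ x hx => ?_
    exact ell_bound hx.1 hx.2 hm θ _ (ell_num_bound hx.1 (hx.2.trans hm) θ) 3
  · exact intervalIntegrable_const
  · exact ae_of_all _ fun θ _ x hx => ell_deriv_K hx.1 (hx.2.trans hm) θ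

lemma ell_hasDeriv_E {k : ℝ} (hk0 : 0 < k) (hk1 : k < 1) :
    HasDerivAt (fun x : ℝ => ∫ θ in (0:ℝ)..(π / 2), √(1 - x ^ 2 * sin θ ^ 2))
      (∫ θ in (0:ℝ)..(π / 2), -(k * sin θ ^ 2) / √(1 - k ^ 2 * sin θ ^ 2)) k := by
  obtain ⟨m, hkm, hm⟩ := exists_between hk1
  have hs : Ioo 0 m ∈ 𝓝 k := Ioo_mem_nhds hk0 hkm
  have hc : ∀ x : ℝ, Continuous (fun θ => √(1 - x ^ 2 * sin θ ^ 2)) := fun x => by fun_prop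
  refine (intervalIntegral.hasDerivAt_integral_of_dominated_loc_of_deriv_le
    (F := fun x θ => √(1 - x ^ 2 * sin θ ^ 2))
    (F' := fun x θ => -(x * sin θ ^ 2) / √(1 - x ^ 2 * sin θ ^ 2))
    (bound := fun _ => 1 / √(1 - m ^ 2) ^ 1) hs ?_ ?_ ?_ ?_ ?_ ?_).2
  · exact Eventually.of_forall fun x => (hc x).aestronglyMeasurable
  · exact (hc k).intervalIntegrable _ _
  · have := (ell_cont hk0 hk1 (fun θ => -(k * sin θ ^ 2)) (by fun_prop) 1)
    simp only [pow_one] at this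
    exact this.aestronglyMeasurable
  · refine ae_of_all _ fun θ _ x hx => ?_
    have := ell_bound hx.1 hx.2 hm θ (-(x * sin θ ^ 2))
      (by rw [abs_neg]; exact ell_num_bound hx.1 (hx.2.trans hm) θ) 1
    simpa only [pow_one] using this
  · exact intervalIntegrable_const
  · exact ae_of_all _ fun θ _ x hx => ell_deriv_E hx.1 (hx.2.trans hm) θ

/-- `k ↦ K(k)(E(k) − (1−k²)K(k))` is differentiable on `(0,1)` with
strictly positive derivative, where `K`, `E` are the complete elliptic integrals of
the first and second kind. -/
theorem cnoidal_norm_derivative_pos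
    (K E : ℝ → ℝ)
    (hK : ∀ k : ℝ, K k = ∫ θ in (0:ℝ)..(Real.pi / 2),
      1 / Real.sqrt (1 - k ^ 2 * Real.sin θ ^ 2))
    (hE : ∀ k : ℝ, E k = ∫ θ in (0:ℝ)..(Real.pi / 2),
      Real.sqrt (1 - k ^ 2 * Real.sin θ ^ 2)) :
    ∀ k ∈ Set.Ioo (0:ℝ) 1,
      DifferentiableAt ℝ (fun k => K k * (E k - (1 - k ^ 2) * K k)) k
      ∧ 0 < deriv (fun k => K k * (E k - (1 - k ^ 2) * K k)) k := by
  intro k hk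
  obtain ⟨hk0, hk1⟩ := hk
  have hKd := ell_hasDeriv_K hk0 hk1
  have hEd := ell_hasDeriv_E hk0 hk1
  rw [← funext hK] at hKd
  rw [← funext hE] at hEd
  have hpi : (0:ℝ) < π / 2 := by positivity
  have hDp := ell_D_pos hk0 hk1
  have hq : HasDerivAt (fun x : ℝ => 1 - x ^ 2) (-(2 * k)) k := by
    simpa using ((hasDerivAt_id k).pow 2).const_sub 1
  have hmain := hKd.mul (hEd.sub (hq.mul hKd))
  have c1 : Continuous (fun θ => 1 / √(1 - k ^ 2 * sin θ ^ 2)) := by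
    simpa using ell_cont hk0 hk1 (fun _ => 1) continuous_const 1
  have c2 : Continuous (fun θ => √(1 - k ^ 2 * sin θ ^ 2)) := by fun_prop
  have c3 : Continuous (fun θ => k * sin θ ^ 2 / √(1 - k ^ 2 * sin θ ^ 2) ^ 3) :=
    ell_cont hk0 hk1 (fun θ => k * sin θ ^ 2) (by fun_prop) 3
  have c4 : Continuous (fun θ => -(k * sin θ ^ 2) / √(1 - k ^ 2 * sin θ ^ 2)) := by
    simpa using ell_cont hk0 hk1 (fun θ => -(k * sin θ ^ 2)) (by fun_prop) 1
  have c5 : Continuous (fun θ => -(2 * k) * (1 / √(1 - k ^ 2 * sin θ ^ 2))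
      + (1 - k ^ 2) * (k * sin θ ^ 2 / √(1 - k ^ 2 * sin θ ^ 2) ^ 3)) :=
    (c1.const_mul _).add (c3.const_mul _)
  have hKpos : 0 < K k := by
    rw [hK]
    refine intervalIntegral.intervalIntegral_pos_of_pos_on (c1.intervalIntegrable _ _) ?_ hpi
    intro θ _
    have := sqrt_pos.2 (hDp θ)
    positivity
  have hK'nn : 0 ≤ ∫ θ in (0:ℝ)..(π / 2), k * sin θ ^ 2 / √(1 - k ^ 2 * sin θ ^ 2) ^ 3 := by
    refine intervalIntegral.integral_nonneg hpi.le fun θ _ => ?_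
    positivity
  have hB : 0 ≤ E k - (1 - k ^ 2) * K k := by
    rw [hK, hE, ← intervalIntegral.integral_const_mul, ← intervalIntegral.integral_sub
      (c2.intervalIntegrable _ _) ((c1.const_mul _).intervalIntegrable _ _)]
    refine intervalIntegral.integral_nonneg hpi.le fun θ _ => ?_
    have hs := sqrt_pos.2 (hDp θ)
    have hsq := sq_sqrt (hDp θ).le
    have h1 : sin θ ^ 2 ≤ 1 := sin_sq_le_one θ
    rw [mul_one_div, sub_nonneg, div_le_iff₀ hs, ← sq, hsq]
    nlinarith [mul_nonneg (sq_nonneg k) (sub_nonneg.2 h1)]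
  have hB' : 0 < (∫ θ in (0:ℝ)..(π / 2), -(k * sin θ ^ 2) / √(1 - k ^ 2 * sin θ ^ 2))
      - (-(2 * k) * K k + (1 - k ^ 2) *
        ∫ θ in (0:ℝ)..(π / 2), k * sin θ ^ 2 / √(1 - k ^ 2 * sin θ ^ 2) ^ 3) := by
    rw [hK, ← intervalIntegral.integral_const_mul, ← intervalIntegral.integral_const_mul,
      ← intervalIntegral.integral_add ((c1.const_mul _).intervalIntegrable _ _)
        ((c3.const_mul _).intervalIntegrable _ _),
      ← intervalIntegral.integral_sub (c4.intervalIntegrable _ _)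
        (c5.intervalIntegrable _ _)]
    refine intervalIntegral.intervalIntegral_pos_of_pos_on
      ((c4.sub c5).intervalIntegrable _ _) ?_ hpi
    intro θ hθ
    have hs := sqrt_pos.2 (hDp θ)
    have hsq := sq_sqrt (hDp θ).le
    have hcos : 0 < cos θ := cos_pos_of_mem_Ioo ⟨by linarith [hθ.1], hθ.2⟩
    have hD := hDp θ
    have hsc : sin θ ^ 2 = 1 - cos θ ^ 2 := by rw [← sin_sq_add_cos_sq θ]; ring
    have key : -(k * sin θ ^ 2) / √(1 - k ^ 2 * sin θ ^ 2)
        - (-(2 * k) * (1 / √(1 - k ^ 2 * sin θ ^ 2))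
          + (1 - k ^ 2) * (k * sin θ ^ 2 / √(1 - k ^ 2 * sin θ ^ 2) ^ 3))
        = k * cos θ ^ 2 * (1 + (1 - k ^ 2 * sin θ ^ 2)) / √(1 - k ^ 2 * sin θ ^ 2) ^ 3 := by
      generalize √(1 - k ^ 2 * sin θ ^ 2) = r at hs hsq
      have e : -(k * sin θ ^ 2) / r - (-(2 * k) * (1 / r) + (1 - k ^ 2) * (k * sin θ ^ 2 / r ^ 3))
        = (k * (2 - sin θ ^ 2) * r ^ 2 - (1 - k ^ 2) * k * sin θ ^ 2) / r ^ 3 := by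
        field_simp
        ring
      rw [e, hsq, hsc]
      congr 1
      ring
    rw [key]
    positivity
  have hfin : HasDerivAt (fun k => K k * (E k - (1 - k ^ 2) * K k)) _ k := hmain
  refine ⟨hfin.differentiableAt, ?_⟩
  rw [hfin.deriv]
  exact add_pos_of_nonneg_of_pos (mul_nonneg hK'nn hB) (mul_pos hKpos hB')
end
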